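/- (Guard_NB for Needham–Schroeder–Lowe.) If evs ∈ nsl, A ∉ bad, B ∉ bad and Says B A (Crypt (pubK A) ⟨Nonce NA, Nonce NB, Agent B⟩) ∈ set evs, then Guard NB {priK A, priK B} (spies evs), i.e. the nonce NB is guarded in all traffic by the private keys of A and B. -/

import Mathlib

inductive agent : Type
  | Server : agent
  | Friend : ℕ → agent
  | Spy : agent
deriving DecidableEq

inductive msg : Type
  | Agent : agent → msg
  | Number : ℕ → msg
  | Nonce : ℕ → msg
  | Key : ℕ → msg
  | Hash : msg → msg
  | MPair : msg → msg → msg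
  | Crypt : ℕ → msg → msg
deriving DecidableEq

inductive partsP (H : Set msg) : msg → Prop
  | Inj : ∀ X, X ∈ H → partsP H X
  | Fst : ∀ X Y, partsP H (msg.MPair X Y) → partsP H X
  | Snd : ∀ X Y, partsP H (msg.MPair X Y) → partsP H Y
  | Body : ∀ K X, partsP H (msg.Crypt K X) → partsP H X

/-- `parts H`: sub-components of messages of `H`. -/
def parts (H : Set msg) : Set msg := {X | partsP H X}

inductive analzP (invKey : ℕ → ℕ) (H : Set msg) : msg → Prop
  | Inj : ∀ X, X ∈ H → analzP invKey H X
  | Fst : ∀ X Y, analzP invKey H (msg.MPair X Y) → analzP invKey H X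
  | Snd : ∀ X Y, analzP invKey H (msg.MPair X Y) → analzP invKey H Y
  | Decrypt : ∀ K X, analzP invKey H (msg.Crypt K X) →
      analzP invKey H (msg.Key (invKey K)) → analzP invKey H X

/-- `analz invKey H`: what can be obtained by decomposing and decrypting messages of `H`. -/
def analz (invKey : ℕ → ℕ) (H : Set msg) : Set msg := {X | analzP invKey H X}

inductive synthP (H : Set msg) : msg → Prop
  | Inj : ∀ X, X ∈ H → synthP H X
  | Ag : ∀ a, synthP H (msg.Agent a)
  | Num : ∀ n, synthP H (msg.Number n)
  | Hsh : ∀ X, synthP H X → synthP H (msg.Hash X)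
  | Pr : ∀ X Y, synthP H X → synthP H Y → synthP H (msg.MPair X Y)
  | Cry : ∀ K X, synthP H X → msg.Key K ∈ H → synthP H (msg.Crypt K X)

/-- `synth H`: messages that can be synthesized from `H`. -/
def synth (H : Set msg) : Set msg := {X | synthP H X}

inductive guardP (invKey : ℕ → ℕ) (n : ℕ) (Ks : Set ℕ) : msg → Prop
  | No_Nonce : ∀ X, msg.Nonce n ∉ parts {X} → guardP invKey n Ks X
  | Guard : ∀ K X, invKey K ∈ Ks → guardP invKey n Ks (msg.Crypt K X)
  | Cry : ∀ K X, guardP invKey n Ks X → guardP invKey n Ks (msg.Crypt K X)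
  | Pr : ∀ X Y, guardP invKey n Ks X → guardP invKey n Ks Y →
      guardP invKey n Ks (msg.MPair X Y)

/-- `guard n Ks`: messages in which `Nonce n` is guarded by the keys of `Ks`. -/
def guardMsg (invKey : ℕ → ℕ) (n : ℕ) (Ks : Set ℕ) : Set msg := {X | guardP invKey n Ks X}

/-- `Guard n Ks H`: every message of `H` lies in `guard n Ks`. -/
def Guard (invKey : ℕ → ℕ) (n : ℕ) (Ks : Set ℕ) (H : Set msg) : Prop :=
  ∀ X ∈ H, X ∈ guardMsg invKey n Ks
inductive event : Type
  | Says : agent → agent → msg → event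
deriving DecidableEq

def msgOf : event → msg
  | event.Says _ _ X => X

/-- Set of messages sent in a trace. -/
def sent (evs : List event) : Set msg :=
  {X | ∃ A B, event.Says A B X ∈ evs}
/-- Private key of an agent: the inverse of its public key. -/
def priK (invKey : ℕ → ℕ) (pubK : agent → ℕ) (A : agent) : ℕ := invKey (pubK A)

/-- Initial knowledge of each agent in a public-key infrastructure:
every agent knows its own private key and all public keys; the spy moreover
knows the private keys of the bad agents. -/
def initStatePK (invKey : ℕ → ℕ) (pubK : agent → ℕ) (bad : Set agent) : agent → Set msg :=
  fun A =>
    match A with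
    | agent.Spy =>
        {X | ∃ B ∈ bad, X = msg.Key (priK invKey pubK B)} ∪ {X | ∃ B, X = msg.Key (pubK B)}
    | _ => {msg.Key (priK invKey pubK A)} ∪ {X | ∃ B, X = msg.Key (pubK B)}

/-- `spies evs`: the private keys of the bad agents, all public keys, and
every message sent in `evs`. -/
def spiesPK (invKey : ℕ → ℕ) (pubK : agent → ℕ) (bad : Set agent) (evs : List event) :
    Set msg :=
  initStatePK invKey pubK bad agent.Spy ∪ sent evs

/-- `used evs`: parts of all agents' initial knowledge and of all messages sent in `evs`. -/
def usedPK (invKey : ℕ → ℕ) (pubK : agent → ℕ) (bad : Set agent) (evs : List event) :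
    Set msg :=
  parts ((⋃ A, initStatePK invKey pubK bad A) ∪ sent evs)
/-- The Needham–Schroeder–Lowe protocol. -/
inductive nsl (invKey : ℕ → ℕ) (pubK : agent → ℕ) (bad : Set agent) : List event → Prop
  | Nil : nsl invKey pubK bad []
  | Fake : ∀ evs B X, nsl invKey pubK bad evs →
      X ∈ synth (analz invKey (spiesPK invKey pubK bad evs)) →
      nsl invKey pubK bad (event.Says agent.Spy B X :: evs)
  | NS1 : ∀ evs A B NA, nsl invKey pubK bad evs →
      msg.Nonce NA ∉ usedPK invKey pubK bad evs →
      nsl invKey pubK bad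
        (event.Says A B (msg.Crypt (pubK B) (msg.MPair (msg.Nonce NA) (msg.Agent A))) :: evs)
  | NS2 : ∀ evs A A' B NA NB, nsl invKey pubK bad evs →
      msg.Nonce NB ∉ usedPK invKey pubK bad evs →
      event.Says A' B (msg.Crypt (pubK B) (msg.MPair (msg.Nonce NA) (msg.Agent A))) ∈ evs →
      nsl invKey pubK bad
        (event.Says B A (msg.Crypt (pubK A)
          (msg.MPair (msg.Nonce NA) (msg.MPair (msg.Nonce NB) (msg.Agent B)))) :: evs)
  | NS3 : ∀ evs A B B' NA NB, nsl invKey pubK bad evs →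
      event.Says A B (msg.Crypt (pubK B) (msg.MPair (msg.Nonce NA) (msg.Agent A))) ∈ evs →
      event.Says B' A (msg.Crypt (pubK A)
        (msg.MPair (msg.Nonce NA) (msg.MPair (msg.Nonce NB) (msg.Agent B)))) ∈ evs →
      nsl invKey pubK bad (event.Says A B (msg.Crypt (pubK B) (msg.Nonce NB)) :: evs)

/-!
Once `B` has sent `Crypt (pubK A) ⟨Nonce NA, Nonce NB, Agent B⟩`, no later event releases `NB` from
the protection of the private keys of `A` and `B`. As these keys never leave honest hands, the spy
can neither analyse guarded traffic down to `NB` nor synthesize an unguarded message. Honest agents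
only forward a nonce in answer to a message that seems to have introduced it, and a nonce unknown to
the spy is introduced by a single message of the whole trace, here the one sent by `B`. Hence `NB`
is never mistaken for the nonce of a first message, and it is only ever confirmed to the responder
named in the second message, which is `B`: this is where Lowe's correction enters.
-/

section Messages

open msg

variable {invKey : ℕ → ℕ} {n : ℕ} {Ks : Set ℕ} {G H S : Set msg} {X Y Z : msg}

theorem subset_parts : H ⊆ parts H := fun X hX => partsP.Inj X hX

theorem parts_subset (hH : H ⊆ S) (hpair : ∀ X Y, MPair X Y ∈ S → X ∈ S ∧ Y ∈ S)
    (hcrypt : ∀ K X, Crypt K X ∈ S → X ∈ S) : parts H ⊆ S := by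
  intro Z hZ
  induction hZ with
  | Inj X hX => exact hH hX
  | Fst X Y _ ih => exact (hpair X Y ih).1
  | Snd X Y _ ih => exact (hpair X Y ih).2
  | Body K X _ ih => exact hcrypt K X ih

theorem parts_subset_parts (h : G ⊆ parts H) : parts G ⊆ parts H :=
  parts_subset h (fun X Y hXY => ⟨partsP.Fst X Y hXY, partsP.Snd X Y hXY⟩) partsP.Body

theorem parts_mono (h : G ⊆ H) : parts G ⊆ parts H :=
  parts_subset_parts (h.trans subset_parts)

theorem parts_eq_self (hpair : ∀ X Y, MPair X Y ∉ H) (hcrypt : ∀ K X, Crypt K X ∉ H) :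
    parts H = H :=
  (parts_subset subset_rfl (fun X Y h => absurd h (hpair X Y))
    fun K X h => absurd h (hcrypt K X)).antisymm subset_parts

theorem parts_union : parts (G ∪ H) = parts G ∪ parts H := by
  refine (parts_subset (Set.union_subset_union subset_parts subset_parts) ?_ ?_).antisymm
    (Set.union_subset (parts_mono Set.subset_union_left) (parts_mono Set.subset_union_right))
  · rintro X Y (h | h)
    · exact ⟨Or.inl (partsP.Fst X Y h), Or.inl (partsP.Snd X Y h)⟩
    · exact ⟨Or.inr (partsP.Fst X Y h), Or.inr (partsP.Snd X Y h)⟩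
  · rintro K X (h | h)
    · exact Or.inl (partsP.Body K X h)
    · exact Or.inr (partsP.Body K X h)

theorem parts_insert : parts (insert X H) = parts {X} ∪ parts H := by
  rw [Set.insert_eq, parts_union]

@[simp]
theorem parts_singleton_agent (a : agent) : parts {Agent a} = {Agent a} :=
  parts_eq_self (by simp) (by simp)

@[simp]
theorem parts_singleton_number (m : ℕ) : parts {Number m} = {Number m} :=
  parts_eq_self (by simp) (by simp)

@[simp]
theorem parts_singleton_nonce (m : ℕ) : parts {Nonce m} = {Nonce m} :=
  parts_eq_self (by simp) (by simp)

@[simp]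
theorem parts_singleton_hash (X : msg) : parts {Hash X} = {Hash X} :=
  parts_eq_self (by simp) (by simp)

@[simp]
theorem parts_singleton_mpair (X Y : msg) :
    parts {MPair X Y} = insert (MPair X Y) (parts {X} ∪ parts {Y}) := by
  have hmem : MPair X Y ∈ parts {MPair X Y} := subset_parts rfl
  rw [← parts_union]
  refine (parts_subset (by simp) ?_ ?_).antisymm (Set.insert_subset hmem (parts_subset_parts ?_))
  · rintro X' Y' (h | h)
    · cases h
      exact ⟨Or.inr (subset_parts (Or.inl rfl)), Or.inr (subset_parts (Or.inr rfl))⟩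
    · exact ⟨Or.inr (partsP.Fst X' Y' h), Or.inr (partsP.Snd X' Y' h)⟩
  · rintro K X' (h | h)
    · cases h
    · exact Or.inr (partsP.Body K X' h)
  · rintro Z (rfl | rfl)
    · exact partsP.Fst _ _ hmem
    · exact partsP.Snd _ _ hmem

@[simp]
theorem parts_singleton_crypt (K : ℕ) (X : msg) :
    parts {Crypt K X} = insert (Crypt K X) (parts {X}) := by
  have hmem : Crypt K X ∈ parts {Crypt K X} := subset_parts rfl
  refine (parts_subset (by simp) ?_ ?_).antisymm (Set.insert_subset hmem (parts_subset_parts ?_))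
  · rintro X' Y' (h | h)
    · cases h
    · exact ⟨Or.inr (partsP.Fst X' Y' h), Or.inr (partsP.Snd X' Y' h)⟩
  · rintro K' X' (h | h)
    · cases h
      exact Or.inr (subset_parts rfl)
    · exact Or.inr (partsP.Body K' X' h)
  · rintro Z rfl
    exact partsP.Body _ _ hmem

theorem analz_subset_parts : analz invKey H ⊆ parts H := by
  intro Z hZ
  induction hZ with
  | Inj X hX => exact subset_parts hX
  | Fst X Y _ ih => exact partsP.Fst X Y ih
  | Snd X Y _ ih => exact partsP.Snd X Y ih
  | Decrypt K X _ _ ih _ => exact partsP.Body K X ih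

theorem analz_mono (h : G ⊆ H) : analz invKey G ⊆ analz invKey H := by
  intro Z hZ
  induction hZ with
  | Inj X hX => exact analzP.Inj X (h hX)
  | Fst X Y _ ih => exact analzP.Fst X Y ih
  | Snd X Y _ ih => exact analzP.Snd X Y ih
  | Decrypt K X _ _ ih ihKey => exact analzP.Decrypt K X ih ihKey

theorem nonce_mem_of_mem_synth (h : Nonce n ∈ synth H) : Nonce n ∈ H := by
  cases h with
  | Inj _ h => exact h

theorem key_mem_of_mem_synth {k : ℕ} (h : Key k ∈ synth H) : Key k ∈ H := by
  cases h with
  | Inj _ h => exact h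

theorem mem_synth_analz_of_mpair (h : MPair X Y ∈ synth (analz invKey H)) :
    X ∈ synth (analz invKey H) ∧ Y ∈ synth (analz invKey H) := by
  cases h with
  | Inj _ h => exact ⟨synthP.Inj X (analzP.Fst X Y h), synthP.Inj Y (analzP.Snd X Y h)⟩
  | Pr _ _ hX hY => exact ⟨hX, hY⟩

theorem parts_synth_subset : parts (synth H) ⊆ parts H ∪ synth H := by
  refine parts_subset Set.subset_union_right ?_ ?_
  · rintro X Y (h | h)
    · exact ⟨Or.inl (partsP.Fst X Y h), Or.inl (partsP.Snd X Y h)⟩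
    · cases h with
      | Inj _ h =>
        have hparts := subset_parts h
        exact ⟨Or.inl (partsP.Fst X Y hparts), Or.inl (partsP.Snd X Y hparts)⟩
      | Pr _ _ hX hY => exact ⟨Or.inr hX, Or.inr hY⟩
  · rintro K X (h | h)
    · exact Or.inl (partsP.Body K X h)
    · cases h with
      | Inj _ h => exact Or.inl (partsP.Body K X (subset_parts h))
      | Cry _ _ hX _ => exact Or.inr hX

theorem parts_singleton_subset_of_mem_synth_analz (hX : X ∈ synth (analz invKey H)) :
    parts {X} ⊆ parts H ∪ synth (analz invKey H) :=
  calc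
    parts {X} ⊆ parts (synth (analz invKey H)) := parts_mono (Set.singleton_subset_iff.2 hX)
    _ ⊆ parts (analz invKey H) ∪ synth (analz invKey H) := parts_synth_subset
    _ ⊆ parts H ∪ synth (analz invKey H) :=
      Set.union_subset_union_left _ (parts_subset_parts analz_subset_parts)

@[simp]
theorem agent_mem_guardMsg (a : agent) : Agent a ∈ guardMsg invKey n Ks :=
  guardP.No_Nonce _ (by simp)

@[simp]
theorem nonce_mem_guardMsg_iff {m : ℕ} : Nonce m ∈ guardMsg invKey n Ks ↔ n ≠ m := by
  constructor
  · rintro ⟨_, h⟩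
    simpa using h
  · intro h
    exact guardP.No_Nonce _ (by simpa using h)

@[simp]
theorem mpair_mem_guardMsg_iff :
    MPair X Y ∈ guardMsg invKey n Ks ↔ X ∈ guardMsg invKey n Ks ∧ Y ∈ guardMsg invKey n Ks := by
  refine ⟨fun h => ?_, fun h => guardP.Pr X Y h.1 h.2⟩
  cases h with
  | No_Nonce _ h =>
    simp only [parts_singleton_mpair, Set.mem_insert_iff, reduceCtorEq, Set.mem_union, false_or,
      not_or] at h
    exact ⟨guardP.No_Nonce X h.1, guardP.No_Nonce Y h.2⟩
  | Pr _ _ hX hY => exact ⟨hX, hY⟩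

@[simp]
theorem crypt_mem_guardMsg_iff {K : ℕ} :
    Crypt K X ∈ guardMsg invKey n Ks ↔ invKey K ∈ Ks ∨ X ∈ guardMsg invKey n Ks := by
  refine ⟨fun h => ?_, fun h => h.elim (guardP.Guard K X) (guardP.Cry K X)⟩
  cases h with
  | No_Nonce _ h =>
    simp only [parts_singleton_crypt, Set.mem_insert_iff, reduceCtorEq, false_or] at h
    exact Or.inr (guardP.No_Nonce X h)
  | Guard _ _ hK => exact Or.inl hK
  | Cry _ _ hX => exact Or.inr hX

theorem guard_of_nonce_notMem_parts (h : Nonce n ∉ parts H) : Guard invKey n Ks H := fun X hX =>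
  guardP.No_Nonce X fun hn => h (parts_mono (Set.singleton_subset_iff.2 hX) hn)

theorem guard_analz (hG : Guard invKey n Ks H) (hKs : ∀ k ∈ Ks, Key k ∉ analz invKey H) :
    Guard invKey n Ks (analz invKey H) := by
  intro Z hZ
  induction hZ with
  | Inj X hX => exact hG X hX
  | Fst X Y _ ih => exact (mpair_mem_guardMsg_iff.1 ih).1
  | Snd X Y _ ih => exact (mpair_mem_guardMsg_iff.1 ih).2
  | Decrypt K X _ hK ih _ =>
    exact (crypt_mem_guardMsg_iff.1 ih).resolve_left fun h => hKs _ h hK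

theorem guard_synth (hG : Guard invKey n Ks H) : Guard invKey n Ks (synth H) := by
  intro Z hZ
  induction hZ with
  | Inj X hX => exact hG X hX
  | Ag a => exact agent_mem_guardMsg a
  | Num m => exact guardP.No_Nonce _ (by simp)
  | Hsh X => exact guardP.No_Nonce _ (by simp)
  | Pr X Y _ _ ihX ihY => exact guardP.Pr X Y ihX ihY
  | Cry K X _ _ ih => exact guardP.Cry K X ih

theorem nonce_notMem_analz_of_guard (hG : Guard invKey n Ks H)
    (hKs : ∀ k ∈ Ks, Key k ∉ analz invKey H) : Nonce n ∉ analz invKey H :=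
  fun h => nonce_mem_guardMsg_iff.1 (guard_analz hG hKs _ h) rfl

/-- `IntroducesNonce n Z`: the message `Z` has the shape in which a first or second message of the
protocol presents the fresh nonce `n`. Only the second component of a second message is fresh, so
its first component is arbitrary. -/
inductive IntroducesNonce (n : ℕ) : msg → Prop
  | first (K : ℕ) (a : agent) : IntroducesNonce n (Crypt K (MPair (Nonce n) (Agent a)))
  | second (K : ℕ) (X : msg) (a : agent) :
      IntroducesNonce n (Crypt K (MPair X (MPair (Nonce n) (Agent a))))

namespace IntroducesNonce

theorem nonce_mem_parts (hZ : IntroducesNonce n Z) (h : Z ∈ parts H) : Nonce n ∈ parts H := by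
  cases hZ with
  | first => exact partsP.Fst _ _ (partsP.Body _ _ h)
  | second => exact partsP.Fst _ _ (partsP.Snd _ _ (partsP.Body _ _ h))

theorem mem_parts_of_mem_synth (hZ : IntroducesNonce n Z) (h : Z ∈ synth (analz invKey H))
    (hn : Nonce n ∉ analz invKey H) : Z ∈ parts H := by
  have nonce_notMem_synth : Nonce n ∉ synth (analz invKey H) := mt nonce_mem_of_mem_synth hn
  cases h with
  | Inj _ h => exact analz_subset_parts h
  | Cry _ _ hbody _ =>
    cases hZ with
    | first => exact absurd (mem_synth_analz_of_mpair hbody).1 nonce_notMem_synth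
    | second =>
      have htail := (mem_synth_analz_of_mpair hbody).2
      exact absurd (mem_synth_analz_of_mpair htail).1 nonce_notMem_synth
  | _ => cases hZ

end IntroducesNonce

end Messages

section Traces

open msg event

variable {invKey : ℕ → ℕ} {pubK : agent → ℕ} {bad : Set agent} {evs : List event}
  {A B C D : agent} {X Z : msg} {n : ℕ} {Ks : Set ℕ}

theorem spiesPK_nil : spiesPK invKey pubK bad [] = initStatePK invKey pubK bad agent.Spy := by
  simp [spiesPK, sent]

theorem spiesPK_cons :
    spiesPK invKey pubK bad (Says A B X :: evs) = insert X (spiesPK invKey pubK bad evs) := by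
  have hsent : sent (Says A B X :: evs) = insert X (sent evs) := by
    ext Z
    simp only [sent, List.mem_cons, Says.injEq, Set.mem_ofPred_eq, Set.mem_insert_iff]
    aesop
  rw [spiesPK, hsent, Set.union_insert, spiesPK]

theorem mem_spiesPK_of_says (h : Says A B X ∈ evs) : X ∈ spiesPK invKey pubK bad evs :=
  Or.inr ⟨A, B, h⟩

theorem parts_spiesPK_subset_usedPK :
    parts (spiesPK invKey pubK bad evs) ⊆ usedPK invKey pubK bad evs :=
  parts_mono (Set.union_subset_union_left _ (Set.subset_iUnion _ agent.Spy))

theorem guard_spiesPK_cons_iff :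
    Guard invKey n Ks (spiesPK invKey pubK bad (Says A B X :: evs)) ↔
      X ∈ guardMsg invKey n Ks ∧ Guard invKey n Ks (spiesPK invKey pubK bad evs) := by
  rw [spiesPK_cons]
  exact Set.forall_mem_insert

theorem guard_spiesPK_of_nonce_notMem_usedPK (h : Nonce n ∉ usedPK invKey pubK bad evs) :
    Guard invKey n Ks (spiesPK invKey pubK bad evs) :=
  guard_of_nonce_notMem_parts fun hn => h (parts_spiesPK_subset_usedPK hn)

theorem parts_initStatePK :
    parts (initStatePK invKey pubK bad A) = initStatePK invKey pubK bad A := by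
  cases A <;> exact parts_eq_self (by simp [initStatePK]) (by simp [initStatePK])

namespace nsl

theorem of_cons {e : event} (h : nsl invKey pubK bad (e :: evs)) : nsl invKey pubK bad evs := by
  cases h <;> assumption

theorem key_mem_initStatePK (hevs : nsl invKey pubK bad evs) {k : ℕ}
    (hk : Key k ∈ parts (spiesPK invKey pubK bad evs)) :
    Key k ∈ initStatePK invKey pubK bad agent.Spy := by
  induction hevs with
  | Nil => rwa [spiesPK_nil, parts_initStatePK] at hk
  | Fake evs B X _ hX ih =>
    rw [spiesPK_cons, parts_insert] at hk
    rcases hk with hk | hk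
    · rcases parts_singleton_subset_of_mem_synth_analz hX hk with hk | hk
      · exact ih hk
      · exact ih (analz_subset_parts (key_mem_of_mem_synth hk))
    · exact ih hk
  | NS1 _ _ _ _ _ _ ih => exact ih (by simpa [spiesPK_cons, parts_insert] using hk)
  | NS2 _ _ _ _ _ _ _ _ _ ih => exact ih (by simpa [spiesPK_cons, parts_insert] using hk)
  | NS3 _ _ _ _ _ _ _ _ _ ih => exact ih (by simpa [spiesPK_cons, parts_insert] using hk)

theorem priK_notMem_analz (hevs : nsl invKey pubK bad evs)
    (hpri : Function.Injective (priK invKey pubK))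
    (hpubpri : ∀ A B : agent, pubK A ≠ priK invKey pubK B) (hA : A ∉ bad) :
    Key (priK invKey pubK A) ∉ analz invKey (spiesPK invKey pubK bad evs) := by
  intro h
  rcases hevs.key_mem_initStatePK (analz_subset_parts h) with ⟨B, hB, hAB⟩ | ⟨B, hAB⟩
  · exact hA (hpri (Key.inj hAB) ▸ hB)
  · exact hpubpri B A (Key.inj hAB).symm

theorem mem_parts_or_eq_of_introducesNonce (hevs : nsl invKey pubK bad (Says A B X :: evs))
    (hZ : IntroducesNonce n Z) (hn : Nonce n ∉ analz invKey (spiesPK invKey pubK bad evs))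
    (hmem : Z ∈ parts (spiesPK invKey pubK bad (Says A B X :: evs))) :
    Z ∈ parts (spiesPK invKey pubK bad evs) ∨
      Z = X ∧ Nonce n ∉ usedPK invKey pubK bad evs := by
  rw [spiesPK_cons, parts_insert] at hmem
  rcases hmem with hX | hold
  · cases hevs with
    | Fake _ _ _ _ hfake =>
      left
      rcases parts_singleton_subset_of_mem_synth_analz hfake hX with h | h
      · exact h
      · exact hZ.mem_parts_of_mem_synth h hn
    | NS1 => right; cases hZ <;> simp_all
    | NS2 => right; cases hZ <;> simp_all
    | NS3 => cases hZ <;> simp at hX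
  · exact Or.inl hold

theorem eq_of_introducesNonce (hevs : nsl invKey pubK bad evs) {Z' : msg}
    (hn : Nonce n ∉ analz invKey (spiesPK invKey pubK bad evs))
    (hZ : IntroducesNonce n Z) (hZ' : IntroducesNonce n Z')
    (hmem : Z ∈ parts (spiesPK invKey pubK bad evs))
    (hmem' : Z' ∈ parts (spiesPK invKey pubK bad evs)) : Z = Z' := by
  induction evs with
  | nil =>
    rw [spiesPK_nil, parts_initStatePK] at hmem
    cases hZ <;> simp [initStatePK] at hmem
  | cons e evs ih =>
    obtain ⟨A, B, X⟩ := e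
    have hn' : Nonce n ∉ analz invKey (spiesPK invKey pubK bad evs) := fun h =>
      hn (analz_mono (spiesPK_cons ▸ Set.subset_insert X _) h)
    have used {W : msg} (hW : IntroducesNonce n W)
        (h : W ∈ parts (spiesPK invKey pubK bad evs)) : Nonce n ∈ usedPK invKey pubK bad evs :=
      parts_spiesPK_subset_usedPK (hW.nonce_mem_parts h)
    rcases hevs.mem_parts_or_eq_of_introducesNonce hZ hn' hmem with hold | ⟨rfl, hfresh⟩ <;>
      rcases hevs.mem_parts_or_eq_of_introducesNonce hZ' hn' hmem' with hold' | ⟨rfl, hfresh'⟩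
    · exact ih hevs.of_cons hn' hold hold'
    · exact absurd (used hZ hold) hfresh'
    · exact absurd (used hZ' hold') hfresh
    · rfl

theorem mem_guardMsg_of_cons {K : ℕ} {W : msg} (hevs : nsl invKey pubK bad (Says C D X :: evs))
    (hB : priK invKey pubK B ∈ Ks)
    (hKs : ∀ k ∈ Ks, Key k ∉ analz invKey (spiesPK invKey pubK bad evs))
    (hG : Guard invKey n Ks (spiesPK invKey pubK bad evs))
    (hintro : Crypt K (MPair W (MPair (Nonce n) (Agent B))) ∈
      parts (spiesPK invKey pubK bad evs)) :
    X ∈ guardMsg invKey n Ks := by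
  have hused : Nonce n ∈ usedPK invKey pubK bad evs :=
    parts_spiesPK_subset_usedPK ((IntroducesNonce.second K W B).nonce_mem_parts hintro)
  have hunique {Z : msg} (hZ : IntroducesNonce n Z) (hmem : Z ∈ spiesPK invKey pubK bad evs) :
      Z = Crypt K (MPair W (MPair (Nonce n) (Agent B))) :=
    hevs.of_cons.eq_of_introducesNonce (nonce_notMem_analz_of_guard hG hKs) hZ
      (.second K W B) (subset_parts hmem) hintro
  cases hevs with
  | Fake _ _ _ _ hfake => exact guard_synth (guard_analz hG hKs) X hfake
  | NS1 _ _ _ NA _ hfresh =>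
    have hNA : n ≠ NA := by rintro rfl; exact hfresh hused
    simp [hNA]
  | NS2 _ _ _ _ NA NB _ hfresh hfirst =>
    have hNA : n ≠ NA := by
      rintro rfl
      cases hunique (.first _ _) (mem_spiesPK_of_says hfirst)
    have hNB : n ≠ NB := by rintro rfl; exact hfresh hused
    simp [hNA, hNB]
  | NS3 _ _ _ _ _ NB _ _ hsecond =>
    rcases ne_or_eq n NB with hNB | rfl
    · simp [hNB]
    · cases hunique (.second _ _ _) (mem_spiesPK_of_says hsecond)
      exact guardP.Guard _ _ hB

theorem nonce_notMem_usedPK_of_cons {K : ℕ} {W : msg} (hB : B ≠ agent.Spy)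
    (hevs : nsl invKey pubK bad
      (Says B A (Crypt K (MPair W (MPair (Nonce n) (Agent B)))) :: evs)) :
    Nonce n ∉ usedPK invKey pubK bad evs := by
  cases hevs with
  | Fake => exact absurd rfl hB
  | NS2 _ _ _ _ _ _ _ hfresh => exact hfresh

end nsl

end Traces

/-- `Guard_NB` for Needham–Schroeder–Lowe. -/
theorem Guard_NB
    (invKey : ℕ → ℕ) (pubK : agent → ℕ) (bad : Set agent)
    (hinv : ∀ K, invKey (invKey K) = K)
    (hpub : Function.Injective pubK)
    (hpri : Function.Injective (priK invKey pubK))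
    (hpubpri : ∀ A B : agent, pubK A ≠ priK invKey pubK B)
    (hspy : agent.Spy ∈ bad)
    (evs : List event) (A B : agent) (NA NB : ℕ)
    (hevs : nsl invKey pubK bad evs) (hA : A ∉ bad) (hB : B ∉ bad)
    (hsays : event.Says B A (msg.Crypt (pubK A)
      (msg.MPair (msg.Nonce NA) (msg.MPair (msg.Nonce NB) (msg.Agent B)))) ∈ evs) :
    Guard invKey NB {priK invKey pubK A, priK invKey pubK B} (spiesPK invKey pubK bad evs) := by
  have hKs (evs : List event) (hevs : nsl invKey pubK bad evs) :
      ∀ k ∈ ({priK invKey pubK A, priK invKey pubK B} : Set ℕ),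
        msg.Key k ∉ analz invKey (spiesPK invKey pubK bad evs) := by
    rintro k (rfl | rfl)
    · exact hevs.priK_notMem_analz hpri hpubpri hA
    · exact hevs.priK_notMem_analz hpri hpubpri hB
  induction evs with
  | nil => simp at hsays
  | cons e evs ih =>
    obtain ⟨C, D, X⟩ := e
    rw [guard_spiesPK_cons_iff]
    rcases List.mem_cons.1 hsays with hnew | hold
    · cases hnew
      have hfresh := hevs.nonce_notMem_usedPK_of_cons (ne_of_mem_of_not_mem hspy hB).symm
      exact ⟨guardP.Guard _ _ (Or.inl rfl), guard_spiesPK_of_nonce_notMem_usedPK hfresh⟩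
    · have hG := ih hevs.of_cons hold
      exact ⟨hevs.mem_guardMsg_of_cons (Or.inr rfl) (hKs evs hevs.of_cons) hG
        (subset_parts (mem_spiesPK_of_says hold)), hG⟩
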